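/- (In-sample calibration property of isotonic regression.) Let N ≥ 1, d : Fin N → ℝ, and let v : Fin N → ℝ be a nondecreasing vector minimizing Σ_{i} (d i − v i)² over all nondecreasing vectors. Then for every real number c, if the level set B = {i : Fin N | v i = c} is nonempty, one has Σ_{i ∈ B} d i = c · |B|, where |B| is the cardinality of B. Equivalently, the fitted value on each level set equals the empirical mean of d on that level set: 𝔼ₙ[D | ṽ(Xᵢ)] = ṽ(Xᵢ) for all i. -/

import Mathlib

open scoped BigOperators

/-!
The residual of an isotonic regression `v` of `d` is orthogonal to every function of `v`. Indeed,
`v` takes finitely many values, so `x ↦ x + t * φ x` is increasing on its range for all `t`, of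
either sign, close to `0`. Hence `v + t * φ ∘ v` competes with `v`, and the derivative at `t = 0` of
its squared distance to `d` vanishes. The indicator function of `{c}` is the choice of `φ` that
isolates the level set of `c`.
-/

section IsotonicRegression

open Filter Topology

theorem eventually_strictMonoOn_add_mul {s : Set ℝ} (hs : s.Finite) (φ : ℝ → ℝ) :
    ∀ᶠ t in 𝓝 (0 : ℝ), StrictMonoOn (fun x ↦ x + t * φ x) s := by
  have key : ∀ x y : ℝ, x < y → ∀ᶠ t in 𝓝 (0 : ℝ), x + t * φ x < y + t * φ y := by
    intro x y hxy
    have hcont (z : ℝ) : ContinuousAt (fun t : ℝ ↦ z + t * φ z) 0 := by fun_prop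
    exact (hcont x).eventually_lt (hcont y) (by simpa using hxy)
  simp only [StrictMonoOn, hs.eventually_all, eventually_imp_distrib_left]
  exact fun x _ y _ ↦ key x y

theorem sum_mul_eq_zero_of_isLocalMin {ι : Type*} {s : Finset ι} {r e : ι → ℝ}
    (h : IsLocalMin (fun t : ℝ ↦ ∑ i ∈ s, (r i - t * e i) ^ 2) 0) :
    ∑ i ∈ s, r i * e i = 0 := by
  have hderiv : HasDerivAt (fun t : ℝ ↦ ∑ i ∈ s, (r i - t * e i) ^ 2)
      (∑ i ∈ s, -2 * (r i * e i)) 0 := by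
    refine HasDerivAt.fun_sum fun i _ ↦ ?_
    refine ((((hasDerivAt_id (0 : ℝ)).mul_const (e i)).const_sub (r i)).fun_pow 2).congr_deriv ?_
    simp only [id_eq]
    ring
  have hzero := h.hasDerivAt_eq_zero hderiv
  rw [← Finset.mul_sum] at hzero
  linarith

variable {ι : Type*} [Fintype ι] [Preorder ι] {d v : ι → ℝ}

/-- `v` is an isotonic regression of `d`: a least-squares fit of `d` among the monotone functions
on the finite preorder `ι`. -/
structure IsIsotonicRegression (d v : ι → ℝ) : Prop where
  monotone : Monotone v
  sum_sq_le : ∀ w : ι → ℝ, Monotone w → ∑ i, (d i - v i) ^ 2 ≤ ∑ i, (d i - w i) ^ 2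

theorem IsIsotonicRegression.sum_residual_mul_comp_eq_zero (h : IsIsotonicRegression d v)
    (φ : ℝ → ℝ) : ∑ i, (d i - v i) * φ (v i) = 0 := by
  apply sum_mul_eq_zero_of_isLocalMin
  filter_upwards [eventually_strictMonoOn_add_mul (Set.finite_range v) φ] with t ht
  have hmono : Monotone fun i ↦ v i + t * φ (v i) := fun i j hij ↦
    ht.monotoneOn (Set.mem_range_self i) (Set.mem_range_self j) (h.monotone hij)
  simpa only [zero_mul, sub_zero, sub_sub] using h.sum_sq_le _ hmono

theorem isotonic_regression_level_set_mean_general (h : IsIsotonicRegression d v) (c : ℝ) :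
    ∑ i with v i = c, d i = c * (Finset.univ.filter fun i ↦ v i = c).card := by
  have hresidual : ∑ i with v i = c, (d i - v i) = 0 := by
    simpa only [mul_ite, mul_one, mul_zero, ← Finset.sum_filter] using
      h.sum_residual_mul_comp_eq_zero fun x ↦ if x = c then 1 else 0
  calc
    ∑ i with v i = c, d i = ∑ i with v i = c, v i := by
      rwa [Finset.sum_sub_distrib, sub_eq_zero] at hresidual
    _ = ∑ i with v i = c, c := Finset.sum_congr rfl fun i hi ↦ (Finset.mem_filter.mp hi).2
    _ = c * (Finset.univ.filter fun i ↦ v i = c).card := by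
      rw [Finset.sum_const, nsmul_eq_mul, mul_comm]

end IsotonicRegression

/-- In-sample calibration property of isotonic regression: on each nonempty level set
of the isotonic fit, the fitted value equals the empirical mean of `d`. -/
theorem isotonic_regression_level_set_mean (N : ℕ) (hN : 1 ≤ N) (d v : Fin N → ℝ)
    (hmono : Monotone v)
    (hmin : ∀ w : Fin N → ℝ, Monotone w →
      ∑ i, (d i - v i) ^ 2 ≤ ∑ i, (d i - w i) ^ 2)
    (c : ℝ) (B : Finset (Fin N)) (hB : B = Finset.univ.filter (fun i => v i = c))
    (hBne : B.Nonempty) :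
    ∑ i ∈ B, d i = c * B.card := by
  subst hB
  exact isotonic_regression_level_set_mean_general ⟨hmono, hmin⟩ c
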